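/- Let u be a smooth solution of the 1-dimensional Schrödinger flow with Neumann boundary conditions on [0,T]. Then the quantity ∫₀¹ |∂_t u(x,t)|² dx − (1/4) ∫₀¹ |∂_x u(x,t)|⁴ dx is conserved: its time derivative vanishes for every t ∈ [0,T], so it equals its value at t = 0 for all t ∈ [0,T]. -/

import Mathlib

open MeasureTheory Set

noncomputable section

abbrev E3 := EuclideanSpace ℝ (Fin 3)

/-- The cross product on `EuclideanSpace ℝ (Fin 3)`. -/
def cross3 (a b : E3) : E3 :=
  (WithLp.equiv 2 (Fin 3 → ℝ)).symm
    (crossProduct ((WithLp.equiv 2 (Fin 3 → ℝ)) a) ((WithLp.equiv 2 (Fin 3 → ℝ)) b))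

/-- Partial derivative in the space variable of `u = u x t`. -/
def pdx (u : ℝ → ℝ → E3) : ℝ → ℝ → E3 := fun x t => deriv (fun y => u y t) x

/-- Partial derivative in the time variable of `u = u x t`. -/
def pdt (u : ℝ → ℝ → E3) : ℝ → ℝ → E3 := fun x t => deriv (fun s => u x s) t

/-- `u` is a smooth solution of the 1-dimensional Schrödinger flow with Neumann
boundary conditions on `[0,1] × [0,T]`. -/
def IsSol (T : ℝ) (u : ℝ → ℝ → E3) : Prop :=
  ContDiff ℝ (⊤ : ℕ∞) (fun p : ℝ × ℝ => u p.1 p.2) ∧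
  (∀ x ∈ Icc (0:ℝ) 1, ∀ t ∈ Icc (0:ℝ) T, ‖u x t‖ = 1) ∧
  (∀ x ∈ Icc (0:ℝ) 1, ∀ t ∈ Icc (0:ℝ) T, pdt u x t = cross3 (u x t) (pdx (pdx u) x t)) ∧
  (∀ t ∈ Icc (0:ℝ) T, pdx u 0 t = 0 ∧ pdx u 1 t = 0)

/-- Squared `L²` norm on `[0,1]`. -/
def L2sq (f : ℝ → E3) : ℝ := ∫ x in (0:ℝ)..1, ‖f x‖ ^ 2

/-- Squared `H^k` Sobolev norm on `[0,1]`. -/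
def Hsq (k : ℕ) (f : ℝ → E3) : ℝ :=
  ∑ j ∈ Finset.range (k + 1), ∫ x in (0:ℝ)..1, ‖deriv^[j] f x‖ ^ 2

def Sm (f : ℝ → ℝ → E3) : Prop := ContDiff ℝ (⊤ : ℕ∞) (fun p : ℝ × ℝ => f p.1 p.2)

theorem Sm.hasX {f : ℝ → ℝ → E3} (hf : Sm f) (x t : ℝ) :
    HasDerivAt (fun y => f y t) (fderiv ℝ (fun p : ℝ × ℝ => f p.1 p.2) (x, t) (1, 0)) x := by
  have h := (hf.differentiable (by simp) (x, t)).hasFDerivAt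
  have h2 : HasDerivAt (fun y : ℝ => (y, t)) ((1 : ℝ), (0 : ℝ)) x :=
    (hasDerivAt_id x).prodMk (hasDerivAt_const x t)
  exact HasFDerivAt.comp_hasDerivAt x h h2

theorem Sm.hasT {f : ℝ → ℝ → E3} (hf : Sm f) (x t : ℝ) :
    HasDerivAt (fun s => f x s) (fderiv ℝ (fun p : ℝ × ℝ => f p.1 p.2) (x, t) (0, 1)) t := by
  have h := (hf.differentiable (by simp) (x, t)).hasFDerivAt
  have h2 : HasDerivAt (fun y : ℝ => (x, y)) ((0 : ℝ), (1 : ℝ)) t :=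
    (hasDerivAt_const t x).prodMk (hasDerivAt_id t)
  exact HasFDerivAt.comp_hasDerivAt t h h2

theorem Sm.pdx_eq {f : ℝ → ℝ → E3} (hf : Sm f) (x t : ℝ) :
    pdx f x t = fderiv ℝ (fun p : ℝ × ℝ => f p.1 p.2) (x, t) (1, 0) := (hf.hasX x t).deriv

theorem Sm.pdt_eq {f : ℝ → ℝ → E3} (hf : Sm f) (x t : ℝ) :
    pdt f x t = fderiv ℝ (fun p : ℝ × ℝ => f p.1 p.2) (x, t) (0, 1) := (hf.hasT x t).deriv

theorem Sm.fd {f : ℝ → ℝ → E3} (hf : Sm f) :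
    ContDiff ℝ (⊤ : ℕ∞) (fderiv ℝ (fun p : ℝ × ℝ => f p.1 p.2)) :=
  ContDiff.fderiv_right (n := ((⊤ : ℕ∞) : WithTop ℕ∞)) hf (by simp)

theorem Sm.pdx {f : ℝ → ℝ → E3} (hf : Sm f) : Sm (pdx f) := by
  have h : ContDiff ℝ (⊤ : ℕ∞)
      (fun p : ℝ × ℝ => fderiv ℝ (fun p : ℝ × ℝ => f p.1 p.2) p (1, 0)) :=
    hf.fd.clm_apply contDiff_const
  unfold Sm
  simpa only [hf.pdx_eq] using h

theorem Sm.pdt {f : ℝ → ℝ → E3} (hf : Sm f) : Sm (pdt f) := by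
  have h : ContDiff ℝ (⊤ : ℕ∞)
      (fun p : ℝ × ℝ => fderiv ℝ (fun p : ℝ × ℝ => f p.1 p.2) p (0, 1)) :=
    hf.fd.clm_apply contDiff_const
  unfold Sm
  simpa only [hf.pdt_eq] using h

theorem Sm.comm {f : ℝ → ℝ → E3} (hf : Sm f) : _root_.pdt (_root_.pdx f) = _root_.pdx (_root_.pdt f) := by
  funext x t
  have hs : IsSymmSndFDerivAt ℝ (fun p : ℝ × ℝ => f p.1 p.2) (x, t) :=
    (ContDiff.contDiffAt hf).isSymmSndFDerivAt (by simp only [minSmoothness_of_isRCLikeNormedField]; exact WithTop.coe_le_coe.2 (le_top : (2 : ℕ∞) ≤ ⊤))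
  have hd := hf.fd.differentiable (by simp) (x, t)
  rw [hf.pdx.pdt_eq, hf.pdt.pdx_eq]
  simp only [hf.pdx_eq, hf.pdt_eq]
  rw [fderiv_clm_apply hd (differentiableAt_const _), fderiv_clm_apply hd (differentiableAt_const _)]
  simpa using hs.eq (0, 1) (1, 0)

theorem hasDerivAt_coord {f : ℝ → E3} {f' : E3} {x : ℝ} (h : HasDerivAt f f' x) (i : Fin 3) :
    HasDerivAt (fun y => f y i) (f' i) x :=
  ((EuclideanSpace.proj i : E3 →L[ℝ] ℝ).hasFDerivAt).comp_hasDerivAt x h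

theorem Sm.dx {f : ℝ → ℝ → E3} (hf : Sm f) (x t : ℝ) (i : Fin 3) :
    HasDerivAt (fun y => f y t i) (_root_.pdx f x t i) x := by
  rw [hf.pdx_eq]; exact hasDerivAt_coord (hf.hasX x t) i

theorem Sm.dt {f : ℝ → ℝ → E3} (hf : Sm f) (x t : ℝ) (i : Fin 3) :
    HasDerivAt (fun s => f x s i) (_root_.pdt f x t i) t := by
  rw [hf.pdt_eq]; exact hasDerivAt_coord (hf.hasT x t) i

theorem Sm.cont {f : ℝ → ℝ → E3} (hf : Sm f) (i : Fin 3) :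
    Continuous (fun p : ℝ × ℝ => f p.1 p.2 i) :=
  (EuclideanSpace.proj i : E3 →L[ℝ] ℝ).continuous.comp
    (ContDiff.continuous hf)

theorem nsq (v : E3) : ‖v‖ ^ 2 = v 0 ^ 2 + v 1 ^ 2 + v 2 ^ 2 := by
  rw [EuclideanSpace.real_norm_sq_eq, Fin.sum_univ_three]

theorem cross3_0 (a b : E3) : cross3 a b 0 = a 1 * b 2 - a 2 * b 1 := by
  simp [cross3, cross_apply]
theorem cross3_1 (a b : E3) : cross3 a b 1 = a 2 * b 0 - a 0 * b 2 := by
  simp [cross3, cross_apply]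
theorem cross3_2 (a b : E3) : cross3 a b 2 = a 0 * b 1 - a 1 * b 0 := by
  simp [cross3, cross_apply]

theorem param_deriv (F F' : ℝ → ℝ → ℝ) (hF : Continuous (fun p : ℝ × ℝ => F p.1 p.2))
    (hF' : Continuous (fun p : ℝ × ℝ => F' p.1 p.2))
    (hd : ∀ x t, HasDerivAt (fun s => F x s) (F' x t) t) (t : ℝ) :
    HasDerivAt (fun s => ∫ x in (0:ℝ)..1, F x s) (∫ x in (0:ℝ)..1, F' x t) t := by
  obtain ⟨M, hM⟩ := ((isCompact_Icc (a := (0:ℝ)) (b := 1)).prod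
    (isCompact_Icc (a := t - 1) (b := t + 1))).bddAbove_image hF'.norm.continuousOn
  have c1 : ∀ s, Continuous (fun x => F x s) := fun s =>
    hF.comp (continuous_id.prodMk continuous_const)
  have c2 : ∀ s, Continuous (fun x => F' x s) := fun s =>
    hF'.comp (continuous_id.prodMk continuous_const)
  refine (intervalIntegral.hasDerivAt_integral_of_dominated_loc_of_deriv_le
    (F := fun s x => F x s) (F' := fun s x => F' x s) (bound := fun _ => M)
    (s := Icc (t - 1) (t + 1)) (Icc_mem_nhds (by linarith) (by linarith))
    (Filter.Eventually.of_forall fun s => (c1 s).aestronglyMeasurable)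
    ((c1 t).intervalIntegrable _ _) (c2 t).aestronglyMeasurable ?_ ?_ ?_).2
  · refine Filter.Eventually.of_forall fun x hx s hs => ?_
    rw [uIoc_of_le zero_le_one] at hx
    exact hM ⟨(x, s), ⟨⟨hx.1.le, hx.2⟩, hs⟩, rfl⟩
  · exact continuous_const.intervalIntegrable _ _
  · exact Filter.Eventually.of_forall fun x _ s _ => hd x s

theorem alg (a0 a1 a2 b0 b1 b2 c0 c1 c2 d0 d1 d2 e0 e1 e2 q0 q1 q2 g0 g1 g2 : ℝ)
    (h1 : a0 ^ 2 + a1 ^ 2 + a2 ^ 2 = 1) (h2 : a0 * c0 + a1 * c1 + a2 * c2 = 0)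
    (h2' : a0 * b0 + a1 * b1 + a2 * b2 = 0)
    (h3 : b0 * c0 + b1 * c1 + b2 * c2 + (a0 * e0 + a1 * e1 + a2 * e2) = 0)
    (hc0 : c0 = a1 * d2 - a2 * d1) (hc1 : c1 = a2 * d0 - a0 * d2) (hc2 : c2 = a0 * d1 - a1 * d0)
    (hg0 : g0 = c1 * d2 - c2 * d1 + (a1 * q2 - a2 * q1))
    (hg1 : g1 = c2 * d0 - c0 * d2 + (a2 * q0 - a0 * q2))
    (hg2 : g2 = c0 * d1 - c1 * d0 + (a0 * q1 - a1 * q0)) :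
    2 * (c0 * g0 + c1 * g1 + c2 * g2) - (b0 ^ 2 + b1 ^ 2 + b2 ^ 2) * (b0 * e0 + b1 * e1 + b2 * e2)
    = 2 * (c0 * (b1 * e2 - b2 * e1) + c1 * (b2 * e0 - b0 * e2) + c2 * (b0 * e1 - b1 * e0)
        + (c0 * (a1 * q2 - a2 * q1) + c1 * (a2 * q0 - a0 * q2) + c2 * (a0 * q1 - a1 * q0)))
      - 2 * (b0 * d0 + b1 * d1 + b2 * d2) * (b0 * c0 + b1 * c1 + b2 * c2)
      - (b0 ^ 2 + b1 ^ 2 + b2 ^ 2) * (d0 * c0 + d1 * c1 + d2 * c2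
        + (b0 * e0 + b1 * e1 + b2 * e2)) := by
  have k1 : d0 * c0 + d1 * c1 + d2 * c2 = 0 := by rw [hc0, hc1, hc2]; ring
  have k2 : c0 * g0 + c1 * g1 + c2 * g2 =
      c0 * (a1 * q2 - a2 * q1) + c1 * (a2 * q0 - a0 * q2) + c2 * (a0 * q1 - a1 * q0) := by
    rw [hg0, hg1, hg2]; ring
  have k3 : b0 * (a1 * c2 - a2 * c1) + b1 * (a2 * c0 - a0 * c2) + b2 * (a0 * c1 - a1 * c0)
      = -(b0 * d0 + b1 * d1 + b2 * d2) := by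
    rw [hc0, hc1, hc2]
    linear_combination (a0 * d0 + a1 * d1 + a2 * d2) * h2'
      - (b0 * d0 + b1 * d1 + b2 * d2) * h1
  have k4 : c0 * (b1 * e2 - b2 * e1) + c1 * (b2 * e0 - b0 * e2) + c2 * (b0 * e1 - b1 * e0)
      = (b0 * d0 + b1 * d1 + b2 * d2) * (b0 * c0 + b1 * c1 + b2 * c2) := by
    have k5 : (c0 * (b1 * e2 - b2 * e1) + c1 * (b2 * e0 - b0 * e2) + c2 * (b0 * e1 - b1 * e0))
        * (a0 ^ 2 + a1 ^ 2 + a2 ^ 2)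
        = (a0 * c0 + a1 * c1 + a2 * c2) *
            (a0 * (b1 * e2 - b2 * e1) + a1 * (b2 * e0 - b0 * e2) + a2 * (b0 * e1 - b1 * e0))
          + (a0 * b0 + a1 * b1 + a2 * b2) *
            (a0 * (e1 * c2 - e2 * c1) + a1 * (e2 * c0 - e0 * c2) + a2 * (e0 * c1 - e1 * c0))
          + (a0 * e0 + a1 * e1 + a2 * e2) *
            (b0 * (a1 * c2 - a2 * c1) + b1 * (a2 * c0 - a0 * c2) + b2 * (a0 * c1 - a1 * c0)) := by
      ring
    rw [h1, h2, h2', k3] at k5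
    linear_combination k5 - (b0 * d0 + b1 * d1 + b2 * d2) * h3
  rw [k1, k2, k4]; ring

theorem sol_facts {T : ℝ} {u : ℝ → ℝ → E3} (hu : IsSol T u) {x t : ℝ}
    (hx : x ∈ Ioo (0:ℝ) 1) (ht : t ∈ Ioo (0:ℝ) T) :
    2 * (pdt u x t 0 * pdt (pdt u) x t 0 + pdt u x t 1 * pdt (pdt u) x t 1
        + pdt u x t 2 * pdt (pdt u) x t 2)
      - (pdx u x t 0 ^ 2 + pdx u x t 1 ^ 2 + pdx u x t 2 ^ 2) *
        (pdx u x t 0 * pdx (pdt u) x t 0 + pdx u x t 1 * pdx (pdt u) x t 1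
          + pdx u x t 2 * pdx (pdt u) x t 2)
    = 2 * (pdt u x t 0 * (pdx u x t 1 * pdx (pdt u) x t 2 - pdx u x t 2 * pdx (pdt u) x t 1)
          + pdt u x t 1 * (pdx u x t 2 * pdx (pdt u) x t 0 - pdx u x t 0 * pdx (pdt u) x t 2)
          + pdt u x t 2 * (pdx u x t 0 * pdx (pdt u) x t 1 - pdx u x t 1 * pdx (pdt u) x t 0)
        + (pdt u x t 0 * (u x t 1 * pdx (pdx (pdt u)) x t 2 - u x t 2 * pdx (pdx (pdt u)) x t 1)
          + pdt u x t 1 * (u x t 2 * pdx (pdx (pdt u)) x t 0 - u x t 0 * pdx (pdx (pdt u)) x t 2)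
          + pdt u x t 2 * (u x t 0 * pdx (pdx (pdt u)) x t 1 - u x t 1 * pdx (pdx (pdt u)) x t 0)))
      - 2 * (pdx u x t 0 * pdx (pdx u) x t 0 + pdx u x t 1 * pdx (pdx u) x t 1
          + pdx u x t 2 * pdx (pdx u) x t 2)
        * (pdx u x t 0 * pdt u x t 0 + pdx u x t 1 * pdt u x t 1 + pdx u x t 2 * pdt u x t 2)
      - (pdx u x t 0 ^ 2 + pdx u x t 1 ^ 2 + pdx u x t 2 ^ 2) *
        (pdx (pdx u) x t 0 * pdt u x t 0 + pdx (pdx u) x t 1 * pdt u x t 1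
          + pdx (pdx u) x t 2 * pdt u x t 2
        + (pdx u x t 0 * pdx (pdt u) x t 0 + pdx u x t 1 * pdx (pdt u) x t 1
          + pdx u x t 2 * pdx (pdt u) x t 2)) := by
  obtain ⟨hS, hN, hE, -⟩ := hu
  have hS : Sm u := hS
  have nX : Ioo (0:ℝ) 1 ∈ nhds x := Ioo_mem_nhds hx.1 hx.2
  have nT : Ioo (0:ℝ) T ∈ nhds t := Ioo_mem_nhds ht.1 ht.2
  have hN' : ∀ y ∈ Ioo (0:ℝ) 1, ∀ s ∈ Ioo (0:ℝ) T, u y s 0 ^ 2 + u y s 1 ^ 2 + u y s 2 ^ 2 = 1 := by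
    intro y hy s hs
    rw [← nsq, hN y (Ioo_subset_Icc_self hy) s (Ioo_subset_Icc_self hs)]; norm_num
  have h2 : ∀ y ∈ Ioo (0:ℝ) 1,
      u y t 0 * pdt u y t 0 + u y t 1 * pdt u y t 1 + u y t 2 * pdt u y t 2 = 0 := by
    intro y hy
    have A := (((hS.dt y t 0).pow 2).add ((hS.dt y t 1).pow 2)).add ((hS.dt y t 2).pow 2)
    have B := (hasDerivAt_const t (1:ℝ)).congr_of_eventuallyEq
      (f₁ := fun s => u y s 0 ^ 2 + u y s 1 ^ 2 + u y s 2 ^ 2)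
      (Filter.mem_of_superset nT fun s hs => hN' y hy s hs)
    have C := A.unique B
    simp at C
    linarith
  have h2' : u x t 0 * pdx u x t 0 + u x t 1 * pdx u x t 1 + u x t 2 * pdx u x t 2 = 0 := by
    have A := (((hS.dx x t 0).pow 2).add ((hS.dx x t 1).pow 2)).add ((hS.dx x t 2).pow 2)
    have B := (hasDerivAt_const x (1:ℝ)).congr_of_eventuallyEq
      (f₁ := fun y => u y t 0 ^ 2 + u y t 1 ^ 2 + u y t 2 ^ 2)
      (Filter.mem_of_superset nX fun y hy => hN' y hy t ht)
    have C := A.unique B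
    simp at C
    linarith
  have hP := hS.pdt
  have h3 : pdx u x t 0 * pdt u x t 0 + pdx u x t 1 * pdt u x t 1 + pdx u x t 2 * pdt u x t 2
      + (u x t 0 * pdx (pdt u) x t 0 + u x t 1 * pdx (pdt u) x t 1
        + u x t 2 * pdx (pdt u) x t 2) = 0 := by
    have A := (((hS.dx x t 0).mul (hP.dx x t 0)).add ((hS.dx x t 1).mul (hP.dx x t 1))).add
      ((hS.dx x t 2).mul (hP.dx x t 2))
    have B := (hasDerivAt_const x (0:ℝ)).congr_of_eventuallyEq
      (f₁ := fun y => u y t 0 * pdt u y t 0 + u y t 1 * pdt u y t 1 + u y t 2 * pdt u y t 2)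
      (Filter.mem_of_superset nX fun y hy => h2 y hy)
    have C := A.unique B
    linarith
  have hX := hS.pdx.pdx
  have hcomm : pdt (pdx (pdx u)) = pdx (pdx (pdt u)) := by rw [hS.pdx.comm, hS.comm]
  have hE' : ∀ s ∈ Ioo (0:ℝ) T, pdt u x s = cross3 (u x s) (pdx (pdx u) x s) := fun s hs =>
    hE x (Ioo_subset_Icc_self hx) s (Ioo_subset_Icc_self hs)
  have key : ∀ i j k : Fin 3,
      (∀ a b : E3, cross3 a b k = a i * b j - a j * b i) →
      pdt (pdt u) x t k = pdt u x t i * pdx (pdx u) x t j - pdt u x t j * pdx (pdx u) x t i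
        + (u x t i * pdx (pdx (pdt u)) x t j - u x t j * pdx (pdx (pdt u)) x t i) := by
    intro i j k hijk
    have A := ((hS.dt x t i).mul (hX.dt x t j)).sub ((hS.dt x t j).mul (hX.dt x t i))
    have B := A.congr_of_eventuallyEq (f₁ := fun s => pdt u x s k)
      (Filter.mem_of_superset nT fun s hs => by
        show pdt u x s k = u x s i * pdx (pdx u) x s j - u x s j * pdx (pdx u) x s i
        rw [hE' s hs, hijk])
    have C := (hP.dt x t k).unique B
    rw [hcomm] at C
    linarith
  refine alg _ _ _ _ _ _ _ _ _ _ _ _ _ _ _ _ _ _ _ _ _ (hN' x hx t ht) (h2 x hx) h2' h3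
    ?_ ?_ ?_ (key 1 2 0 cross3_0) (key 2 0 1 cross3_1) (key 0 1 2 cross3_2)
  · rw [hE' t ht, cross3_0]
  · rw [hE' t ht, cross3_1]
  · rw [hE' t ht, cross3_2]

def flux (u : ℝ → ℝ → E3) (t x : ℝ) : ℝ :=
  2 * (pdt u x t 0 * (u x t 1 * pdx (pdt u) x t 2 - u x t 2 * pdx (pdt u) x t 1)
      + pdt u x t 1 * (u x t 2 * pdx (pdt u) x t 0 - u x t 0 * pdx (pdt u) x t 2)
      + pdt u x t 2 * (u x t 0 * pdx (pdt u) x t 1 - u x t 1 * pdx (pdt u) x t 0))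
    - (pdx u x t 0 ^ 2 + pdx u x t 1 ^ 2 + pdx u x t 2 ^ 2) *
      (pdx u x t 0 * pdt u x t 0 + pdx u x t 1 * pdt u x t 1 + pdx u x t 2 * pdt u x t 2)

def dens (u : ℝ → ℝ → E3) (x t : ℝ) : ℝ :=
  pdt u x t 0 ^ 2 + pdt u x t 1 ^ 2 + pdt u x t 2 ^ 2
    - (1/4) * (pdx u x t 0 ^ 2 + pdx u x t 1 ^ 2 + pdx u x t 2 ^ 2) ^ 2

def densT (u : ℝ → ℝ → E3) (x t : ℝ) : ℝ :=
  2 * (pdt u x t 0 * pdt (pdt u) x t 0 + pdt u x t 1 * pdt (pdt u) x t 1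
        + pdt u x t 2 * pdt (pdt u) x t 2)
      - (pdx u x t 0 ^ 2 + pdx u x t 1 ^ 2 + pdx u x t 2 ^ 2) *
        (pdx u x t 0 * pdx (pdt u) x t 0 + pdx u x t 1 * pdx (pdt u) x t 1
          + pdx u x t 2 * pdx (pdt u) x t 2)

theorem flux_deriv {T : ℝ} {u : ℝ → ℝ → E3} (hu : IsSol T u) {x t : ℝ}
    (hx : x ∈ Ioo (0:ℝ) 1) (ht : t ∈ Ioo (0:ℝ) T) :
    HasDerivAt (flux u t) (densT u x t) x := by
  have hS : Sm u := hu.1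
  unfold densT
  rw [sol_facts hu hx ht]
  have a := hS.dx x t
  have b := hS.pdx.dx x t
  have c := hS.pdt.dx x t
  have e := hS.pdt.pdx.dx x t
  have A := (((((c 0).mul (((a 1).mul (e 2)).sub ((a 2).mul (e 1)))).add
    ((c 1).mul (((a 2).mul (e 0)).sub ((a 0).mul (e 2))))).add
    ((c 2).mul (((a 0).mul (e 1)).sub ((a 1).mul (e 0))))).const_mul 2).sub
    (((((b 0).pow 2).add ((b 1).pow 2)).add ((b 2).pow 2)).mul
      ((((b 0).mul (c 0)).add ((b 1).mul (c 1))).add ((b 2).mul (c 2))))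
  refine HasDerivAt.congr_deriv (f := flux u t) A ?_
  simp
  ring

theorem dens_deriv {u : ℝ → ℝ → E3} (hS : Sm u) (x t : ℝ) :
    HasDerivAt (fun s => dens u x s) (densT u x t) t := by
  have b := hS.pdx.dt x t
  have c := hS.pdt.dt x t
  rw [hS.comm] at b
  have A := ((((c 0).pow 2).add ((c 1).pow 2)).add ((c 2).pow 2)).sub
    ((((((b 0).pow 2).add ((b 1).pow 2)).add ((b 2).pow 2)).pow 2).const_mul (1/4))
  refine HasDerivAt.congr_deriv (f := fun s => dens u x s) A ?_
  simp [densT]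
  ring

theorem dens_cont {u : ℝ → ℝ → E3} (hS : Sm u) :
    Continuous (fun p : ℝ × ℝ => dens u p.1 p.2) := by
  have b := hS.pdx.cont
  have c := hS.pdt.cont
  have b0 := b 0
  have b1 := b 1
  have b2 := b 2
  have c0 := c 0
  have c1 := c 1
  have c2 := c 2
  unfold dens
  exact (((c0.pow 2).add (c1.pow 2)).add (c2.pow 2)).sub
    (continuous_const.mul ((((b0.pow 2).add (b1.pow 2)).add (b2.pow 2)).pow 2))

theorem densT_cont {u : ℝ → ℝ → E3} (hS : Sm u) :
    Continuous (fun p : ℝ × ℝ => densT u p.1 p.2) := by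
  have b0 := hS.pdx.cont 0
  have b1 := hS.pdx.cont 1
  have b2 := hS.pdx.cont 2
  have c0 := hS.pdt.cont 0
  have c1 := hS.pdt.cont 1
  have c2 := hS.pdt.cont 2
  have g0 := hS.pdt.pdt.cont 0
  have g1 := hS.pdt.pdt.cont 1
  have g2 := hS.pdt.pdt.cont 2
  have e0 := hS.pdt.pdx.cont 0
  have e1 := hS.pdt.pdx.cont 1
  have e2 := hS.pdt.pdx.cont 2
  unfold densT
  exact (continuous_const.mul (((c0.mul g0).add (c1.mul g1)).add (c2.mul g2))).sub
    ((((b0.pow 2).add (b1.pow 2)).add (b2.pow 2)).mul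
      (((b0.mul e0).add (b1.mul e1)).add (b2.mul e2)))

theorem flux_cont {u : ℝ → ℝ → E3} (hS : Sm u) (t : ℝ) : Continuous (flux u t) := by
  have k : ∀ {f : ℝ → ℝ → E3}, Sm f → ∀ i : Fin 3, Continuous (fun x => f x t i) :=
    fun hf i => continuous_iff_continuousAt.2 fun x => (hf.dx x t i).continuousAt
  have a0 := k hS 0
  have a1 := k hS 1
  have a2 := k hS 2
  have b0 := k hS.pdx 0
  have b1 := k hS.pdx 1
  have b2 := k hS.pdx 2
  have c0 := k hS.pdt 0
  have c1 := k hS.pdt 1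
  have c2 := k hS.pdt 2
  have e0 := k hS.pdt.pdx 0
  have e1 := k hS.pdt.pdx 1
  have e2 := k hS.pdt.pdx 2
  unfold flux
  exact (continuous_const.mul (((c0.mul ((a1.mul e2).sub (a2.mul e1))).add
      (c1.mul ((a2.mul e0).sub (a0.mul e2)))).add (c2.mul ((a0.mul e1).sub (a1.mul e0))))).sub
    ((((b0.pow 2).add (b1.pow 2)).add (b2.pow 2)).mul
      (((b0.mul c0).add (b1.mul c1)).add (b2.mul c2)))

theorem flux_bdry {T : ℝ} {u : ℝ → ℝ → E3} (hS : Sm u) {x t : ℝ} (ht : t ∈ Ioo (0:ℝ) T)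
    (h : ∀ s ∈ Icc (0:ℝ) T, pdx u x s = 0) : flux u t x = 0 := by
  have e : pdx (pdt u) x t = 0 := by
    rw [← hS.comm]
    have B := (hasDerivAt_const t (0:E3)).congr_of_eventuallyEq (f₁ := fun s => pdx u x s)
      (Filter.mem_of_superset (Ioo_mem_nhds ht.1 ht.2) fun s hs => h s (Ioo_subset_Icc_self hs))
    exact B.deriv
  simp [flux, e, h t (Ioo_subset_Icc_self ht)]

theorem energy_eq {u : ℝ → ℝ → E3} (hS : Sm u) (s : ℝ) :
    (∫ x in (0:ℝ)..1, ‖pdt u x s‖ ^ 2) - (1/4) * (∫ x in (0:ℝ)..1, ‖pdx u x s‖ ^ 4)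
      = ∫ x in (0:ℝ)..1, dens u x s := by
  have k : ∀ {f : ℝ → ℝ → E3}, Sm f → Continuous (fun x => f x s) :=
    fun hf => continuous_iff_continuousAt.2 fun x => (hf.hasX x s).continuousAt
  rw [← intervalIntegral.integral_const_mul, ← intervalIntegral.integral_sub]
  · refine intervalIntegral.integral_congr fun x _ => ?_
    show ‖pdt u x s‖ ^ 2 - 1/4 * ‖pdx u x s‖ ^ 4 = dens u x s
    unfold dens
    rw [← nsq, ← nsq]; ring
  · exact ((k hS.pdt).norm.pow 2).intervalIntegrable _ _
  · exact (((k hS.pdx).norm.pow 4).const_mul _).intervalIntegrable _ _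

theorem conservation_law_schrodinger_flow
    (T : ℝ) (hT : 0 < T) (u : ℝ → ℝ → E3) (hu : IsSol T u) :
    ∀ t ∈ Icc (0:ℝ) T,
      deriv (fun s => (∫ x in (0:ℝ)..1, ‖pdt u x s‖ ^ 2)
          - (1/4) * ∫ x in (0:ℝ)..1, ‖pdx u x s‖ ^ 4) t = 0 ∧
      (∫ x in (0:ℝ)..1, ‖pdt u x t‖ ^ 2) - (1/4) * (∫ x in (0:ℝ)..1, ‖pdx u x t‖ ^ 4)
        = (∫ x in (0:ℝ)..1, ‖pdt u x 0‖ ^ 2) - (1/4) * ∫ x in (0:ℝ)..1, ‖pdx u x 0‖ ^ 4 := by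
  have hS : Sm u := hu.1
  have hD := param_deriv _ _ (dens_cont hS) (densT_cont hS) (dens_deriv hS)
  have hzero : ∀ t ∈ Ioo (0:ℝ) T, (∫ x in (0:ℝ)..1, densT u x t) = 0 := by
    intro t ht
    rw [intervalIntegral.integral_eq_sub_of_hasDerivAt_of_le zero_le_one
      (flux_cont hS t).continuousOn (fun x hx => flux_deriv hu hx ht)
      (((densT_cont hS).comp (continuous_id.prodMk continuous_const)).intervalIntegrable _ _),
      flux_bdry hS ht (fun s hs => (hu.2.2.2 s hs).1),
      flux_bdry hS ht (fun s hs => (hu.2.2.2 s hs).2), sub_zero]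
  have hcl : IsClosed {t : ℝ | (∫ x in (0:ℝ)..1, densT u x t) = 0} := by
    refine isClosed_eq ?_ continuous_const
    exact intervalIntegral.continuous_parametric_intervalIntegral_of_continuous'
      (f := fun t x => densT u x t)
      ((densT_cont hS).comp (continuous_snd.prodMk continuous_fst)) 0 1
  have hz : ∀ t ∈ Icc (0:ℝ) T, (∫ x in (0:ℝ)..1, densT u x t) = 0 := by
    have := closure_minimal (s := Ioo (0:ℝ) T) hzero hcl
    rw [closure_Ioo hT.ne] at this
    exact this
  intro t ht
  simp only [energy_eq hS]
  refine ⟨by rw [(hD t).deriv, hz t ht], ?_⟩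
  exact constant_of_has_deriv_right_zero (f := fun s => ∫ x in (0:ℝ)..1, dens u x s)
    (fun s _ => (hD s).continuousAt.continuousWithinAt)
    (fun s hs => by
      have := (hD s).hasDerivWithinAt (s := Ici s)
      rwa [hz s (Ico_subset_Icc_self hs)] at this) t ht

end
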